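/- Let M : ℝ → Matrix (Fin n) (Fin n) ℝ be differentiable with M(t) symmetric for every t, C : ℝ → Matrix (Fin n) (Fin n) ℝ, J : ℝ → Matrix (Fin 3) (Fin n) ℝ, v : ℝ → ℝⁿ differentiable, τ_g, τ_ext : ℝ → ℝⁿ, u₂ : ℝ → ℝ³, y₁, y₂ : ℝ → ℝ³ differentiable with y₁'(t) = J(t)·v(t) and y₂'(t) = u₂(t), let κ > 0, and let K_D be a symmetric n×n real matrix. Suppose for every t: (i) M'(t) − 2·C(t) is skew-symmetric, and (ii) M(t)·v'(t) + C(t)·v(t) + τ_g(t) = u(t) + τ_ext(t), where u(t) := τ_g(t) − 2κ·J(t)ᵀ·(y₁(t) − y₂(t)) − K_D·(v(t) − J(t)ᵀ·u₂(t)) is the energy-shaping interface. Then the closed-loop Hamiltonian H(t) := (1/2)⟨v(t), M(t)·v(t)⟩ + κ·‖y₁(t) − y₂(t)‖² satisfies, for all t, H'(t) = ⟨J(t)·K_D·v(t), u₂(t)⟩ + ⟨v(t), τ_ext(t)⟩ − 2κ·⟨y₁(t) − y₂(t), u₂(t)⟩ − ⟨v(t), K_D·v(t)⟩. -/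

import Mathlib

open Matrix

/-!
Since `M` is symmetric, `½⟨v, M v⟩` changes at the rate `⟨v, M v̇⟩ + ½⟨v, Ṁ v⟩`, and skew-symmetry
of `Ṁ - 2C` turns the second term into `⟨v, C v⟩`. Hence the kinetic energy changes exactly by the
power `⟨v, M v̇ + C v⟩`. The power of the restoring force `-2κ Jᵀ (y₁ - y₂)` cancels the part of
the rate of `κ‖y₁ - y₂‖²` that is due to `ẏ₁ = J v`, so only the damping, the external force and
the reduced-order input contribute.
-/

section ProductRules

variable {𝕜 𝔸 m n : Type*} [NontriviallyNormedField 𝕜] [NormedRing 𝔸] [NormedAlgebra 𝕜 𝔸]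
  [Fintype n] {t : 𝕜}

theorem hasDerivAt_dotProduct {v w : 𝕜 → n → 𝔸} {v' w' : n → 𝔸}
    (hv : HasDerivAt v v' t) (hw : HasDerivAt w w' t) :
    HasDerivAt (fun s => v s ⬝ᵥ w s) (v' ⬝ᵥ w t + v t ⬝ᵥ w') t := by
  simp only [dotProduct, ← Finset.sum_add_distrib]
  exact HasDerivAt.fun_sum fun i _ => (hasDerivAt_pi.1 hv i).fun_mul (hasDerivAt_pi.1 hw i)

theorem hasDerivAt_mulVec [Finite m] {A : 𝕜 → Matrix m n 𝔸} {A' : Matrix m n 𝔸}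
    {v : 𝕜 → n → 𝔸} {v' : n → 𝔸}
    (hA : ∀ i j, HasDerivAt (fun s => A s i j) (A' i j) t) (hv : HasDerivAt v v' t) :
    HasDerivAt (fun s => A s *ᵥ v s) (A' *ᵥ v t + A t *ᵥ v') t :=
  have := Fintype.ofFinite m
  hasDerivAt_pi.2 fun i => hasDerivAt_dotProduct (hasDerivAt_pi.2 (hA i)) hv

end ProductRules

section QuadraticForms

variable {R n : Type*} [Fintype n]

theorem dotProduct_mulVec_comm_of_isSymm [NonUnitalCommSemiring R] {A : Matrix n n R}
    (hA : A.IsSymm) (x y : n → R) : x ⬝ᵥ A *ᵥ y = y ⬝ᵥ A *ᵥ x := by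
  rw [← dotProduct_transpose_mulVec, hA.eq]

theorem dotProduct_mulVec_self_eq_zero_of_transpose_eq_neg [NonUnitalCommRing R]
    [IsAddTorsionFree R] {A : Matrix n n R} (hA : Aᵀ = -A) (x : n → R) : x ⬝ᵥ A *ᵥ x = 0 := by
  rw [← self_eq_neg, ← dotProduct_neg, ← neg_mulVec, ← hA, dotProduct_transpose_mulVec]

end QuadraticForms

section Energy

variable {m n : Type*} [Fintype m] [Fintype n] {t : ℝ}

theorem hasDerivAt_half_dotProduct_mulVec_self {M : ℝ → Matrix n n ℝ} {M' : Matrix n n ℝ}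
    {v : ℝ → n → ℝ} {v' : n → ℝ} (hM : ∀ i j, HasDerivAt (fun s => M s i j) (M' i j) t)
    (hv : HasDerivAt v v' t) (hMsymm : (M t).IsSymm) :
    HasDerivAt (fun s => (1 / 2) * (v s ⬝ᵥ M s *ᵥ v s))
      (v t ⬝ᵥ M t *ᵥ v' + (1 / 2) * (v t ⬝ᵥ M' *ᵥ v t)) t := by
  convert! (hasDerivAt_dotProduct hv (hasDerivAt_mulVec hM hv)).const_mul (1 / 2) using 1
  rw [dotProduct_mulVec_comm_of_isSymm hMsymm v', dotProduct_add]
  ring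

theorem hasDerivAt_kineticEnergy {M : ℝ → Matrix n n ℝ} {M' C : Matrix n n ℝ}
    {v : ℝ → n → ℝ} {v' : n → ℝ} (hM : ∀ i j, HasDerivAt (fun s => M s i j) (M' i j) t)
    (hv : HasDerivAt v v' t) (hMsymm : (M t).IsSymm)
    (hskew : (M' - (2 : ℝ) • C)ᵀ = -(M' - (2 : ℝ) • C)) :
    HasDerivAt (fun s => (1 / 2) * (v s ⬝ᵥ M s *ᵥ v s)) (v t ⬝ᵥ (M t *ᵥ v' + C *ᵥ v t)) t := by
  convert! hasDerivAt_half_dotProduct_mulVec_self hM hv hMsymm using 1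
  have coriolis := dotProduct_mulVec_self_eq_zero_of_transpose_eq_neg hskew (v t)
  rw [sub_mulVec, smul_mulVec, dotProduct_sub, dotProduct_smul, smul_eq_mul] at coriolis
  rw [dotProduct_add]
  linarith

theorem hasDerivAt_norm_sub_sq {y₁ y₂ : ℝ → EuclideanSpace ℝ m} {y₁' y₂' : EuclideanSpace ℝ m}
    (hy₁ : HasDerivAt y₁ y₁' t) (hy₂ : HasDerivAt y₂ y₂' t) :
    HasDerivAt (fun s => ‖y₁ s - y₂ s‖ ^ 2)
      (2 * ((y₁ t - y₂ t) ⬝ᵥ y₁' - (y₁ t - y₂ t) ⬝ᵥ y₂')) t := by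
  convert! (hy₁.fun_sub hy₂).norm_sq using 2
  rw [EuclideanSpace.inner_eq_star_dotProduct, star_trivial, dotProduct_comm _ (y₁ t - y₂ t).ofLp,
    WithLp.ofLp_sub 2 y₁', dotProduct_sub]

end Energy

section Interface

variable {R m n : Type*} [CommRing R] [Fintype m] [Fintype n]

/-- The energy-shaping interface `u = τ_g - 2κ Jᵀ e - K_D (v - Jᵀ u₂)`: the generalized force that
compensates gravity, pulls the output error `e = y₁ - y₂` to zero with stiffness `2κ`, and damps the
deviation of `v` from `Jᵀ u₂`. All arguments are values at a single instant. -/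
def energyShapingInterface (κ : R) (K_D : Matrix n n R) (J : Matrix m n R) (τg v : n → R)
    (e u₂ : m → R) : n → R :=
  τg - (2 * κ) • Jᵀ *ᵥ e - K_D *ᵥ (v - Jᵀ *ᵥ u₂)

theorem dotProduct_energyShapingInterface {K_D : Matrix n n R} (hKD : K_D.IsSymm) (κ : R)
    (J : Matrix m n R) (τg v : n → R) (e u₂ : m → R) :
    v ⬝ᵥ energyShapingInterface κ K_D J τg v e u₂ =
      v ⬝ᵥ τg - 2 * κ * (e ⬝ᵥ J *ᵥ v) - v ⬝ᵥ K_D *ᵥ v + J *ᵥ K_D *ᵥ v ⬝ᵥ u₂ := by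
  have damping_cross_term : v ⬝ᵥ K_D *ᵥ Jᵀ *ᵥ u₂ = J *ᵥ K_D *ᵥ v ⬝ᵥ u₂ := by
    rw [dotProduct_mulVec_comm_of_isSymm hKD, dotProduct_comm, dotProduct_transpose_mulVec,
      dotProduct_comm]
  simp only [energyShapingInterface, mulVec_sub, dotProduct_sub, dotProduct_smul, smul_eq_mul,
    dotProduct_transpose_mulVec, damping_cross_term]
  ring

end Interface

theorem stmt_4_general {m n : Type*} [Fintype m] [Fintype n] {t : ℝ}
    {M : ℝ → Matrix n n ℝ} {M' C : Matrix n n ℝ} {J : Matrix m n ℝ}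
    {v : ℝ → n → ℝ} {v' τg τext : n → ℝ} {y₁ y₂ : ℝ → EuclideanSpace ℝ m}
    {u₂ : EuclideanSpace ℝ m} {κ : ℝ} {K_D : Matrix n n ℝ}
    (hM : ∀ i j, HasDerivAt (fun s => M s i j) (M' i j) t) (hMsymm : (M t).IsSymm)
    (hv : HasDerivAt v v' t)
    (hy₁ : HasDerivAt y₁ (WithLp.toLp 2 (J *ᵥ v t)) t) (hy₂ : HasDerivAt y₂ u₂ t)
    (hKD : K_D.IsSymm) (hskew : (M' - (2 : ℝ) • C)ᵀ = -(M' - (2 : ℝ) • C))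
    (hdyn : M t *ᵥ v' + C *ᵥ v t + τg =
      energyShapingInterface κ K_D J τg (v t) (y₁ t - y₂ t) u₂ + τext) :
    HasDerivAt (fun s => (1 / 2) * (v s ⬝ᵥ M s *ᵥ v s) + κ * ‖y₁ s - y₂ s‖ ^ 2)
      (J *ᵥ K_D *ᵥ v t ⬝ᵥ u₂ + v t ⬝ᵥ τext - 2 * κ * ((y₁ t - y₂ t) ⬝ᵥ u₂)
        - v t ⬝ᵥ K_D *ᵥ v t) t := by
  have kinetic := hasDerivAt_kineticEnergy hM hv hMsymm hskew
  have potential := (hasDerivAt_norm_sub_sq hy₁ hy₂).const_mul κ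
  have power_balance := congrArg (v t ⬝ᵥ ·) hdyn
  simp only [dotProduct_add _ _ τg, dotProduct_add _ _ τext,
    dotProduct_energyShapingInterface hKD, ← WithLp.ofLp_sub] at power_balance
  convert! kinetic.fun_add potential using 1
  linear_combination -power_balance

/-- Hamiltonian derivative identity, eq. (13) of the paper:
under the dynamics `M v̇ + C v + τ_g = u + τ_ext` with the energy-shaping interface
`u = τ_g − 2κ Jᵀ(y₁ − y₂) − K_D(v − Jᵀ u₂)`, `Ṁ − 2C` skew-symmetric, `M`, `K_D`
symmetric, `ẏ₁ = J v`, `ẏ₂ = u₂`, the closed-loop Hamiltonian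
`H = (1/2)⟨v, M v⟩ + κ‖y₁ − y₂‖²` satisfies
`Ḣ = ⟨J K_D v, u₂⟩ + ⟨v, τ_ext⟩ − 2κ⟨y₁ − y₂, u₂⟩ − ⟨v, K_D v⟩`. -/
theorem stmt_4 (n : ℕ)
    (M M' : ℝ → Matrix (Fin n) (Fin n) ℝ)
    (hM : ∀ t i j, HasDerivAt (fun s => M s i j) (M' t i j) t)
    (hMsymm : ∀ t, (M t).IsSymm)
    (C : ℝ → Matrix (Fin n) (Fin n) ℝ)
    (J : ℝ → Matrix (Fin 3) (Fin n) ℝ)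
    (v v' : ℝ → Fin n → ℝ) (hv : ∀ t, HasDerivAt v (v' t) t)
    (τg τext : ℝ → Fin n → ℝ)
    (u₂ : ℝ → EuclideanSpace ℝ (Fin 3))
    (y₁ y₂ : ℝ → EuclideanSpace ℝ (Fin 3))
    (hy₁ : ∀ t, HasDerivAt y₁ (WithLp.toLp 2 ((J t).mulVec (v t))) t)
    (hy₂ : ∀ t, HasDerivAt y₂ (u₂ t) t)
    (κ : ℝ) (hκ : 0 < κ)
    (K_D : Matrix (Fin n) (Fin n) ℝ) (hKD : K_D.IsSymm)
    (hskew : ∀ t, (M' t - (2 : ℝ) • C t)ᵀ = -(M' t - (2 : ℝ) • C t))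
    (hdyn : ∀ t, (M t).mulVec (v' t) + (C t).mulVec (v t) + τg t =
      (τg t - (2 * κ) • (J t)ᵀ.mulVec (y₁ t - y₂ t)
        - K_D.mulVec (v t - (J t)ᵀ.mulVec (u₂ t))) + τext t) :
    ∀ t : ℝ,
      HasDerivAt
        (fun s => (1 / 2) * (v s ⬝ᵥ (M s).mulVec (v s)) + κ * ‖y₁ s - y₂ s‖ ^ 2)
        ((J t).mulVec (K_D.mulVec (v t)) ⬝ᵥ u₂ t + v t ⬝ᵥ τext t
          - 2 * κ * ((y₁ t - y₂ t) ⬝ᵥ u₂ t) - v t ⬝ᵥ K_D.mulVec (v t)) t := by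
  intro t
  exact stmt_4_general (hM t) (hMsymm t) (hv t) (hy₁ t) (hy₂ t) hKD (hskew t) (hdyn t)
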